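/- arXiv:math/0702246 — 7 statements merged into one kernel-verified Lean document; each statement's English description precedes it below -/
import Mathlib

section
/- Let n be a prime number and let ω = e^{2πi/n}. Let Ω be the n×n matrix with entries a_{i,j} = ω^{ij} for 1 ≤ i, j ≤ n. Then every minor of Ω is non-zero; that is, for any subset I of row indices and subset J of column indices with |I| = |J|, the determinant of the submatrix of Ω with rows I and columns J is non-zero. -/
open Complex Matrix

/-!
For polynomials `f j` and a monic `g` of degree `m`, every matrix `(L i (f j))` of linear forms
`L i` that vanish on the multiples of `g` factors through the matrix `C` of remainders of the `f j`
modulo `g`. Take `f j = X ^ b j`.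

* Evaluation at `x i` and `g = ∏ i, (X - x i)` give `(x i ^ b j) = V * C`, where `V` is the
  Vandermonde matrix of the `x i`. If these are distinct, only `det C ≠ 0` remains to be shown, and
  this may be checked after applying a ring homomorphism `φ`.
* If `φ (x i) = 1` for all `i`, then `φ` turns `g` into `(X - 1) ^ m`, and the derivatives of order
  less than `m` at `1` give `((b j).descFactorial r) = D * φ(C)`. The left-hand side has the same
  determinant as the Vandermonde matrix of the `b j`, so `det C ≠ 0` if the `b j` are distinct in
  the target of `φ`.

Roots of unity of `p`-power order are algebraic integers, and they become `1` modulo any maximal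
ideal above `p` because Frobenius is injective on a field of characteristic `p`.
-/

section RemainderMatrix

open Polynomial

variable {R S ι κ : Type*} [CommRing R] [CommRing S] {m : ℕ}

/-- The matrix whose `j`-th column lists the coefficients of `1, X, …, X ^ (m - 1)` in the remainder
of `f j` modulo `g`. It is meant for `g` monic of degree `m`, when these are the coordinates of the
class of `f j` in the power basis of `R[X] / (g)`. -/
noncomputable def remainderMatrix (m : ℕ) (g : R[X]) (f : ι → R[X]) : Matrix (Fin m) ι R :=
  of fun r j => (f j %ₘ g).coeff r

lemma remainderMatrix_map (φ : R →+* S) {g : R[X]} (hg : g.Monic) (f : ι → R[X]) :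
    (remainderMatrix m g f).map φ = remainderMatrix m (g.map φ) fun j => (f j).map φ := by
  ext r j
  simp only [remainderMatrix, map_apply, of_apply, ← coeff_map, map_modByMonic φ hg]

lemma of_linearMap_eq_mul_remainderMatrix {g : R[X]} (hg : g.Monic) (hdeg : g.natDegree = m)
    (L : κ → R[X] →ₗ[R] R) (hL : ∀ i q, L i (g * q) = 0) (f : ι → R[X]) :
    (of fun i j => L i (f j)) = (of fun i (r : Fin m) => L i (X ^ (r : ℕ))) *
      remainderMatrix m g f := by
  nontriviality R
  ext i j
  have hrem : (f j %ₘ g).degree < m := by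
    rw [← hdeg, ← degree_eq_natDegree hg.ne_zero]
    exact degree_modByMonic_lt _ hg
  calc L i (f j) = L i (f j %ₘ g) := by
        conv_lhs => rw [← modByMonic_add_div (f j) g, map_add, hL, add_zero]
    _ = L i (∑ r : Fin m, (f j %ₘ g).coeff r • X ^ (r : ℕ)) := by
        simp only [smul_X_eq_monomial,
          sum_fin (fun r a => monomial r a) (fun _ => monomial_zero_right _) hrem, sum_monomial_eq]
    _ = _ := by
        simp only [map_sum, map_smul, smul_eq_mul, mul_apply, of_apply, remainderMatrix, mul_comm]

lemma det_of_eval_eq_det_vandermonde_mul (x : Fin m → R) (f : Fin m → R[X]) :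
    (of fun i j => (f j).eval (x i)).det =
      (vandermonde x).det * (remainderMatrix m (∏ i, (X - C (x i))) f).det := by
  nontriviality R
  have hroot (i) (q : R[X]) : leval (x i) ((∏ i, (X - C (x i))) * q) = 0 := by
    rw [leval_apply, eval_mul, eval_prod, Finset.prod_eq_zero (Finset.mem_univ i) (by simp),
      zero_mul]
  have hdeg : (∏ i, (X - C (x i))).natDegree = m := by
    rw [natDegree_finsetProd_X_sub_C_eq_card, Finset.card_fin]
  have hfactor := of_linearMap_eq_mul_remainderMatrix (monic_prod_X_sub_C x Finset.univ) hdeg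
    (fun i => leval (x i)) hroot f
  have hvand : (of fun i (r : Fin m) => leval (x i) (X ^ (r : ℕ))) = vandermonde x := by
    ext i r
    simp [vandermonde_apply]
  rw [← hvand, ← det_mul, ← hfactor]
  rfl

lemma det_vandermonde_natCast_eq_det_descFactorial [IsDomain R] (b : Fin m → ℕ) :
    (vandermonde fun j => (b j : R)).det =
      (of fun r j : Fin m => ((b j).descFactorial r : R)).det := by
  rw [det_eval_matrixOfPolynomials_eq_det_vandermonde _ (fun r => descPochhammer R r)
    (fun r => descPochhammer_natDegree R r) (fun r => monic_descPochhammer R r), ← det_transpose]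
  simp only [descPochhammer_eval_eq_descFactorial, transpose, of_apply]

lemma eval_one_iterate_derivative_X_pow (n r : ℕ) :
    (derivative^[r] (X ^ n : R[X])).eval 1 = n.descFactorial r := by
  simp [iterate_derivative_X_pow_eq_natCast_mul]

lemma eval_iterate_derivative_X_sub_C_pow_mul (c : R) {r : ℕ} (hr : r < m) (q : R[X]) :
    (derivative^[r] ((X - C c) ^ m * q)).eval c = 0 :=
  dvd_iff_isRoot.mp <| (dvd_pow_self _ (Nat.sub_ne_zero_of_lt hr)).trans <|
    pow_sub_dvd_iterate_derivative_of_pow_dvd r (Dvd.intro q rfl)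

lemma det_vandermonde_natCast_eq_mul_det_remainderMatrix [IsDomain R] (b : Fin m → ℕ) :
    (vandermonde fun j => (b j : R)).det =
      (of fun r s : Fin m => ((s : ℕ).descFactorial r : R)).det *
        (remainderMatrix m ((X - C 1) ^ m) fun j => (X : R[X]) ^ b j).det := by
  have hdeg : ((X - C (1 : R)) ^ m).natDegree = m := by
    rw [natDegree_pow, natDegree_X_sub_C, mul_one]
  have hfactor := of_linearMap_eq_mul_remainderMatrix ((monic_X_sub_C (1 : R)).pow m) hdeg
    (fun r : Fin m => leval 1 ∘ₗ derivative ^ (r : ℕ))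
    (fun r q => by
      simpa [Module.End.pow_apply] using eval_iterate_derivative_X_sub_C_pow_mul 1 r.isLt q)
    (fun j => X ^ b j)
  simp only [LinearMap.comp_apply, Module.End.pow_apply, leval_apply,
    eval_one_iterate_derivative_X_pow] at hfactor
  rw [det_vandermonde_natCast_eq_det_descFactorial, hfactor, det_mul]

theorem det_of_pow_ne_zero_of_map_eq_one [IsDomain R] [IsDomain S] (φ : R →+* S) {x : Fin m → R}
    (hx : Function.Injective x) (hφx : ∀ i, φ (x i) = 1) {b : Fin m → ℕ}
    (hb : Function.Injective fun j => (b j : S)) :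
    (of fun i j => x i ^ b j).det ≠ 0 := by
  have hmap : φ (remainderMatrix m (∏ i, (X - C (x i))) fun j => X ^ b j).det =
      (remainderMatrix m ((X - C 1) ^ m) fun j => (X : S[X]) ^ b j).det := by
    rw [RingHom.map_det, RingHom.mapMatrix_apply,
      remainderMatrix_map φ (monic_prod_X_sub_C x Finset.univ)]
    simp [Polynomial.map_prod, hφx]
  have hrem : (remainderMatrix m (∏ i, (X - C (x i))) fun j => X ^ b j).det ≠ 0 := by
    refine fun h => det_vandermonde_ne_zero_iff.mpr hb ?_
    rw [det_vandermonde_natCast_eq_mul_det_remainderMatrix, ← hmap, h, map_zero, mul_zero]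
  have hfactor := det_of_eval_eq_det_vandermonde_mul x fun j => X ^ b j
  simp only [eval_pow, eval_X] at hfactor
  rw [hfactor]
  exact mul_ne_zero (det_vandermonde_ne_zero_iff.mpr hx) hrem

end RemainderMatrix

lemma exists_isMaximal_charP_quotient (A : Type*) [CommRing A] [CharZero A]
    [Algebra.IsIntegral ℤ A] {p : ℕ} (hp : p.Prime) :
    ∃ Q : Ideal A, Q.IsMaximal ∧ CharP (A ⧸ Q) p := by
  have : FaithfulSMul ℤ A :=
    (faithfulSMul_iff_algebraMap_injective ℤ A).mpr (algebraMap ℤ A).injective_int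
  have : (Ideal.span {(p : ℤ)}).IsMaximal :=
    PrincipalIdealRing.isMaximal_of_irreducible (Nat.prime_iff_prime_int.mp hp).irreducible
  obtain ⟨Q, hQ, hQp⟩ :=
    Ideal.exists_maximal_ideal_liesOver_of_isIntegral (S := A) (Ideal.span {(p : ℤ)})
  have hpQ : (p : A) ∈ Q := by
    simpa using (Ideal.mem_of_liesOver Q (Ideal.span {(p : ℤ)}) p).mp
      (Ideal.mem_span_singleton_self _)
  refine ⟨Q, hQ, (CharP.charP_iff_prime_eq_zero hp).mpr ?_⟩
  rw [← map_natCast (Ideal.Quotient.mk Q)]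
  exact Ideal.Quotient.eq_zero_iff_mem.mpr hpQ

theorem det_of_pow_ne_zero_of_pow_prime_pow_eq_one
    {K : Type*} [CommRing K] [IsDomain K] [CharZero K]
    {p k m : ℕ} (hp : p.Prime) {x : Fin m → K} (hx : Function.Injective x)
    (hxp : ∀ i, x i ^ p ^ k = 1) {b : Fin m → ℕ} (hb : ∀ ⦃i j⦄, b i ≡ b j [MOD p] → i = j) :
    (of fun i j => x i ^ b j).det ≠ 0 := by
  let A := integralClosure ℤ K
  have : CharZero A := charZero_of_injective_algebraMap (FaithfulSMul.algebraMap_injective ℤ A)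
  obtain ⟨Q, _, _⟩ := exists_isMaximal_charP_quotient A hp
  have : Fact p.Prime := ⟨hp⟩
  have hint (i) : IsIntegral ℤ (x i) :=
    .of_pow (pow_pos hp.pos k) ((hxp i).symm ▸ isIntegral_one)
  let y : Fin m → A := fun i => ⟨x i, hint i⟩
  have hy : Function.Injective y := fun i j h => hx (congrArg Subtype.val h)
  have hyQ (i) : Ideal.Quotient.mk Q (y i) = 1 := by
    have hyp : y i ^ (p ^ k * 1) = 1 := Subtype.ext (by simpa [y] using hxp i)
    rw [← pow_one (Ideal.Quotient.mk Q (y i)), ← ExpChar.pow_prime_pow_mul_eq_one_iff p k,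
      ← map_pow, hyp, map_one]
  have hbQ : Function.Injective fun j => (b j : A ⧸ Q) := fun i j h =>
    hb ((CharP.natCast_eq_natCast _ p).mp h)
  have hdet := det_of_pow_ne_zero_of_map_eq_one (Ideal.Quotient.mk Q) hy hyQ hbQ
  have hsub : (of fun i j => x i ^ b j) = A.val.mapMatrix (of fun i j => y i ^ b j) := rfl
  rw [hsub, ← AlgHom.map_det]
  exact fun h => hdet (Subtype.ext h)

lemma fin_eq_of_val_add_one_modEq {n : ℕ} {i j : Fin n} (h : (i : ℕ) + 1 ≡ j + 1 [MOD n]) :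
    i = j :=
  Fin.ext ((h.add_right_cancel' 1).eq_of_lt_of_lt i.isLt j.isLt)

theorem chebotarev_minors_general {K : Type*} [CommRing K] [IsDomain K] [CharZero K] {p k m : ℕ}
    (hp : p.Prime) {ω : K} (hω : IsPrimitiveRoot ω (p ^ k)) {a b : Fin m → ℕ}
    (ha : ∀ ⦃i j⦄, a i ≡ a j [MOD p ^ k] → i = j) (hb : ∀ ⦃i j⦄, b i ≡ b j [MOD p] → i = j) :
    (of fun i j => ω ^ (a i * b j)).det ≠ 0 := by
  have hfin : IsOfFinOrder ω := hω.isOfFinOrder (pow_pos hp.pos k).ne'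
  have hinj : Function.Injective fun i => ω ^ a i := fun i j h =>
    ha (hω.eq_orderOf ▸ hfin.pow_eq_pow_iff_modEq.mp h)
  have hroot (i) : (ω ^ a i) ^ p ^ k = 1 := by
    rw [pow_right_comm, hω.pow_eq_one, one_pow]
  simpa only [pow_mul] using det_of_pow_ne_zero_of_pow_prime_pow_eq_one hp hinj hroot hb

/-- **Chebotarev's theorem.** Let `n` be prime, `ω = e^{2πi/n}`, and `Ω` the `n × n`
matrix with entries `a_{i,j} = ω^{ij}` for `1 ≤ i, j ≤ n`. Then every minor of `Ω`
is non-zero: for any choice of equally many rows and columns (given by injective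
maps `e f : Fin m → Fin n`), the determinant of the corresponding submatrix is non-zero. -/
theorem chebotarev_minors (n : ℕ) (hn : n.Prime)
    (ω : ℂ) (hω : ω = Complex.exp (2 * Real.pi * Complex.I / n))
    (Ω : Matrix (Fin n) (Fin n) ℂ)
    (hΩ : ∀ i j : Fin n, Ω i j = ω ^ (((i : ℕ) + 1) * ((j : ℕ) + 1)))
    (m : ℕ) (e f : Fin m → Fin n)
    (he : Function.Injective e) (hf : Function.Injective f) :
    (Ω.submatrix e f).det ≠ 0 := by
  have hprim : IsPrimitiveRoot ω (n ^ 1) := by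
    simpa only [pow_one, hω] using Complex.isPrimitiveRoot_exp n hn.ne_zero
  have hsub : Ω.submatrix e f = of fun i j => ω ^ (((e i : ℕ) + 1) * ((f j : ℕ) + 1)) :=
    Matrix.ext fun _ _ => hΩ _ _
  rw [hsub]
  exact chebotarev_minors_general hn hprim
    (fun i j h => he (fin_eq_of_val_add_one_modEq (by simpa only [pow_one] using h)))
    (fun i j h => hf (fin_eq_of_val_add_one_modEq h))
end

section
/- Let n be a prime number and let P(z) be a non-zero complex polynomial with deg P ≤ n−1. If P has exactly k distinct roots among the n-th roots of unity, then w(P) > k. -/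
open Polynomial

/-!
Fix a valuation ring `V` with residue characteristic `p`. Rescaled by a coefficient of maximal
valuation, `P` has coefficients in `V` and a non-zero reduction, with at most as many terms as `P`.
All roots of unity of `p`-power order reduce to `1`, because `x ^ p ^ a = 1` forces `x = 1` in
characteristic `p`. So `k` such roots of `P` turn into a factor `(X - 1) ^ k` of the reduction.

A polynomial whose `w` exponents are distinct as elements of the ground field vanishes at `1` to
order less than `w`: for an exponent `r` that occurs, `X d/dX - r` removes exactly the term of
exponent `r` and lowers the order of vanishing at `1` by at most one.
-/

section OrderOfVanishing

variable {R : Type*} [CommRing R]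

/-- The differential operator `X d/dX - c`, which multiplies the term of exponent `i` by `i - c`. -/
noncomputable def eulerSub (c : R) (Q : R[X]) : R[X] :=
  X * derivative Q - C c * Q

theorem coeff_eulerSub (c : R) (Q : R[X]) (i : ℕ) :
    (eulerSub c Q).coeff i = (i - c) * Q.coeff i := by
  cases i with
  | zero => simp [eulerSub]
  | succ i =>
    simp only [eulerSub, coeff_sub, coeff_X_mul, coeff_derivative, coeff_C_mul, Nat.cast_succ]
    ring

theorem pow_dvd_eulerSub {q Q : R[X]} {m : ℕ} (h : q ^ (m + 1) ∣ Q) (c : R) :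
    q ^ m ∣ eulerSub c Q := by
  have hderiv : q ^ m ∣ derivative Q := by
    simpa only [Nat.add_sub_cancel] using pow_sub_one_dvd_derivative_of_pow_dvd h
  have hQ : q ^ m ∣ Q := (pow_dvd_pow q m.le_succ).trans h
  exact dvd_sub (hderiv.mul_left X) (hQ.mul_left (C c))

variable [IsDomain R]

theorem support_eulerSub_natCast {Q : R[X]} (hinj : Set.InjOn (Nat.cast : ℕ → R) Q.support)
    {r : ℕ} (hr : r ∈ Q.support) : (eulerSub (r : R) Q).support = Q.support.erase r := by
  ext i
  rw [Finset.mem_erase, mem_support_iff, coeff_eulerSub, mul_ne_zero_iff, ← mem_support_iff,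
    sub_ne_zero]
  exact and_congr_left fun hi => hinj.ne_iff hi hr

theorem one_lt_card_support_of_isRoot {Q : R[X]} (hQ : Q ≠ 0) {a : R} (ha : a ≠ 0)
    (hroot : Q.IsRoot a) : 1 < Q.support.card := by
  by_contra! hle
  obtain ⟨i, b, rfl⟩ := card_support_le_one_iff_monomial.mp hle
  have hb : b ≠ 0 := (monomial_eq_zero_iff b i).not.mp hQ
  rw [IsRoot.def, eval_monomial] at hroot
  exact mul_ne_zero hb (pow_ne_zero i ha) hroot

theorem lt_card_support_of_X_sub_C_pow_dvd {Q : R[X]} (hQ : Q ≠ 0)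
    (hinj : Set.InjOn (Nat.cast : ℕ → R) Q.support) {a : R} (ha : a ≠ 0) {m : ℕ}
    (hdvd : (X - C a) ^ m ∣ Q) : m < Q.support.card := by
  induction m generalizing Q with
  | zero => exact Finset.card_pos.mpr (support_nonempty.mpr hQ)
  | succ m ih =>
    obtain ⟨r, hr⟩ := support_nonempty.mpr hQ
    have hsupp := support_eulerSub_natCast hinj hr
    have hcard : (eulerSub (r : R) Q).support.card + 1 = Q.support.card := by
      rw [hsupp, Finset.card_erase_add_one hr]
    have hroot : Q.IsRoot a := dvd_iff_isRoot.mp ((dvd_pow_self _ m.succ_ne_zero).trans hdvd)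
    have hne : eulerSub (r : R) Q ≠ 0 := by
      have hone_lt := one_lt_card_support_of_isRoot hQ ha hroot
      rw [← support_nonempty, ← Finset.card_pos]
      omega
    have hinj' : Set.InjOn (Nat.cast : ℕ → R) (eulerSub (r : R) Q).support :=
      hinj.mono (by rw [hsupp]; exact_mod_cast Q.support.erase_subset r)
    rw [← hcard]
    exact Nat.succ_lt_succ (ih hne hinj' (pow_dvd_eulerSub hdvd r))

end OrderOfVanishing

section Reduction

theorem exists_valuationSubring_charP_residueField (K : Type*) [Field K] [CharZero K] {p : ℕ}
    (hp : p.Prime) : ∃ V : ValuationSubring K, CharP (IsLocalRing.ResidueField V) p := by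
  let A : Subring K := (Int.castRingHom K).range
  have hI : Ideal.span {(p : A)} ≠ ⊤ := by
    rw [Ne, Ideal.span_singleton_eq_top, isUnit_iff_exists_inv]
    rintro ⟨⟨_, c, rfl⟩, hc⟩
    have hpc : (p : ℤ) * c = 1 := by
      have hcK : (p : K) * c = 1 := congrArg Subtype.val hc
      exact_mod_cast hcK
    exact (Nat.prime_iff_prime_int.mp hp).not_isUnit (IsUnit.of_mul_eq_one c hpc)
  obtain ⟨V, -, hV⟩ := Ideal.image_subset_nonunits_valuationSubring _ hI
  have hpV : ((p : V) : K) ∈ V.nonunits := hV ⟨p, Ideal.mem_span_singleton_self _, rfl⟩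
  have hzero : (p : IsLocalRing.ResidueField V) = 0 := by
    rw [← map_natCast (IsLocalRing.residue V), IsLocalRing.residue_eq_zero_iff]
    exact ValuationSubring.coe_mem_nonunits_iff.mp hpV
  exact ⟨V, (CharP.charP_iff_prime_eq_zero hp).mpr hzero⟩

variable {K : Type*} [Field K]

theorem exists_map_eq_C_mul_and_map_residue_ne_zero (V : ValuationSubring K) {P : K[X]}
    (hP : P ≠ 0) :
    ∃ c ≠ 0, ∃ Q : V[X], Q.map (algebraMap V K) = C c * P ∧ Q.map (IsLocalRing.residue V) ≠ 0 := by
  obtain ⟨i, hi, hmax⟩ := P.support.exists_max_image (fun j => V.valuation (P.coeff j))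
    (support_nonempty.mpr hP)
  have hi0 : P.coeff i ≠ 0 := mem_support_iff.mp hi
  have hmem (j : ℕ) : (P.coeff i)⁻¹ * P.coeff j ∈ V := by
    by_cases hj : j ∈ P.support
    · rw [← V.valuation_le_one_iff, map_mul, map_inv₀,
        inv_mul_le_one₀ ((Valuation.pos_iff _).mpr hi0)]
      exact hmax j hj
    · simp [notMem_support_iff.mp hj]
  have hlifts : C (P.coeff i)⁻¹ * P ∈ lifts (algebraMap V K) := by
    rw [lifts_iff_coeff_lifts]
    exact fun j => ⟨⟨_, hmem j⟩, (coeff_C_mul P).symm⟩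
  obtain ⟨Q, hQ⟩ := (mem_lifts _).mp hlifts
  have hQi : Q.coeff i = 1 := by
    apply FaithfulSMul.algebraMap_injective V K
    rw [← coeff_map, hQ, coeff_C_mul, inv_mul_cancel₀ hi0, map_one]
  refine ⟨_, inv_ne_zero hi0, Q, hQ, fun h => ?_⟩
  simpa [hQi] using congrArg (coeff · i) h

theorem card_lt_card_support_of_residue_eq (V : ValuationSubring K) {P : K[X]} (hP : P ≠ 0)
    (hinj : Set.InjOn (Nat.cast : ℕ → IsLocalRing.ResidueField V) P.support)
    {s : Multiset V} (hs : s.map (algebraMap V K) ≤ P.roots)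
    {a : IsLocalRing.ResidueField V} (ha : a ≠ 0) (hres : ∀ z ∈ s, IsLocalRing.residue V z = a) :
    s.card < P.support.card := by
  obtain ⟨c, hc, Q, hQ, hQ0⟩ := exists_map_eq_C_mul_and_map_residue_ne_zero V hP
  have hVK : Function.Injective (algebraMap V K) := FaithfulSMul.algebraMap_injective V K
  have hsupp : (Q.map (IsLocalRing.residue V)).support ⊆ P.support := calc
    (Q.map (IsLocalRing.residue V)).support ⊆ Q.support := support_map_subset _ Q
    _ = (C c * P).support := by rw [← hQ, support_map_of_injective Q hVK]
    _ = P.support := by ext j; simp [hc]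
  have hdvd : (s.map (X - C ·)).prod ∣ Q := by
    rw [← map_dvd_map _ hVK (monic_multiset_prod_of_monic _ _ fun z _ => monic_X_sub_C z), hQ]
    refine Dvd.dvd.mul_left ?_ (C c)
    simpa only [Polynomial.map_multiset_prod, Multiset.map_map, Function.comp_apply,
      Polynomial.map_sub, map_X, map_C] using
      (Multiset.prod_X_sub_C_dvd_iff_le_roots hP _).mpr hs
  have hdvd_residue : (X - C a) ^ s.card ∣ Q.map (IsLocalRing.residue V) := by
    have hfactor : ∀ z ∈ s, (X - C z).map (IsLocalRing.residue V) = X - C a := fun z hz => by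
      rw [Polynomial.map_sub, map_X, map_C, hres z hz]
    simpa only [Polynomial.map_multiset_prod, Multiset.map_map, Function.comp_apply,
      Multiset.map_congr rfl hfactor, Multiset.map_const', Multiset.prod_replicate]
      using Polynomial.map_dvd (IsLocalRing.residue V) hdvd
  exact (lt_card_support_of_X_sub_C_pow_dvd hQ0 (hinj.mono hsupp) ha hdvd_residue).trans_le
    (Finset.card_le_card hsupp)

theorem mem_valuationSubring_of_pow_eq_one (V : ValuationSubring K) {z : K} {n : ℕ} (hn : n ≠ 0)
    (hz : z ^ n = 1) : z ∈ V := by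
  rw [← V.valuation_le_one_iff, ← pow_le_one_iff hn, ← map_pow, hz, map_one]

theorem residue_eq_one_of_pow_prime_pow_eq_one {A : Type*} [CommRing A] [IsLocalRing A] {p : ℕ}
    [Fact p.Prime] [CharP (IsLocalRing.ResidueField A) p] {z : A} {a : ℕ} (hz : z ^ p ^ a = 1) :
    IsLocalRing.residue A z = 1 := by
  apply iterateFrobenius_inj (IsLocalRing.ResidueField A) p a
  rw [iterateFrobenius_def, ← map_pow, hz, map_one, map_one]

end Reduction

theorem injOn_mod_support_of_natDegree_lt {R : Type*} [Semiring R] {P : R[X]} {n : ℕ}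
    (h : P.natDegree < n) : Set.InjOn (· % n) (P.support : Set ℕ) :=
  fun i hi j hj hij => Nat.ModEq.eq_of_lt_of_lt hij
    ((le_natDegree_of_mem_supp i hi).trans_lt h) ((le_natDegree_of_mem_supp j hj).trans_lt h)

theorem chebotarev_polynomial_general {A : Type*} [CommRing A] [IsDomain A] [CharZero A] {p : ℕ}
    (hp : p.Prime) {P : A[X]} (hP : P ≠ 0) (hinj : Set.InjOn (· % p) (P.support : Set ℕ))
    {s : Multiset A} (hs : s ≤ P.roots) (hunity : ∀ z ∈ s, ∃ a : ℕ, z ^ p ^ a = 1) :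
    s.card < P.support.card := by
  let K := FractionRing A
  have hAK : Function.Injective (algebraMap A K) := FaithfulSMul.algebraMap_injective A K
  have : Fact p.Prime := ⟨hp⟩
  have : CharZero K := charZero_of_injective_algebraMap hAK
  obtain ⟨V, hV⟩ := exists_valuationSubring_charP_residueField K hp
  have hunityK : ∀ z ∈ s.map (algebraMap A K), ∃ a : ℕ, z ^ p ^ a = 1 := by
    simp only [Multiset.mem_map]
    rintro _ ⟨z, hz, rfl⟩
    exact (hunity z hz).imp fun a ha => by rw [← map_pow, ha, map_one]
  have hrootsK : s.map (algebraMap A K) ≤ (P.map (algebraMap A K)).roots :=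
    (Multiset.map_le_map hs).trans (map_roots_le_of_injective P hAK)
  obtain ⟨t, ht⟩ : ∃ t : Multiset V, t.map (algebraMap V K) = s.map (algebraMap A K) :=
    CanLift.prf (s.map (algebraMap A K)) fun z hz =>
      let ⟨a, ha⟩ := hunityK z hz
      mem_valuationSubring_of_pow_eq_one V (pow_ne_zero a hp.ne_zero) ha
  have hres : ∀ z ∈ t, IsLocalRing.residue V z = 1 := fun z hz => by
    obtain ⟨a, ha⟩ := hunityK z (ht ▸ Multiset.mem_map_of_mem _ hz)
    exact residue_eq_one_of_pow_prime_pow_eq_one (p := p) (a := a) (Subtype.ext ha)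
  have hcast : Set.InjOn (Nat.cast : ℕ → IsLocalRing.ResidueField V)
      (P.map (algebraMap A K)).support := by
    rw [support_map_of_injective P hAK]
    exact fun i hi j hj hij => hinj hi hj ((CharP.natCast_eq_natCast _ p).mp hij)
  have hlt := card_lt_card_support_of_residue_eq V ((Polynomial.map_ne_zero_iff hAK).mpr hP) hcast
    (ht ▸ hrootsK) one_ne_zero hres
  rwa [support_map_of_injective P hAK, ← Multiset.card_map (algebraMap V K), ht,
    Multiset.card_map] at hlt

/-- If `n` is prime and `P` is a non-zero complex polynomial of degree at most `n - 1`
having exactly `k` distinct roots among the `n`-th roots of unity, then the number of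
non-zero coefficients of `P` is greater than `k`. -/
theorem chebotarev_polynomial (n : ℕ) (hn : n.Prime)
    (P : Polynomial ℂ) (hP : P ≠ 0) (hdeg : P.natDegree ≤ n - 1)
    (k : ℕ)
    (hk : k = (((Polynomial.nthRoots n (1 : ℂ)).toFinset).filter
      (fun z => P.eval z = 0)).card) :
    P.support.card > k := by
  have hmem : ∀ z ∈ (nthRoots n (1 : ℂ)).toFinset.filter (P.eval · = 0), z ^ n = 1 ∧ P.IsRoot z :=
    fun z hz => by simpa [mem_nthRoots hn.pos] using hz
  exact hk ▸ chebotarev_polynomial_general hn hP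
    (injOn_mod_support_of_natDegree_lt (hdeg.trans_lt (Nat.pred_lt hn.ne_zero)))
    (Finset.val_le_iff_val_subset.mpr fun z hz => (mem_roots hP).mpr (hmem z hz).2)
    fun z hz => ⟨1, (pow_one n).symm ▸ (hmem z hz).1⟩
end

section
/- Let n ≥ 1 be a natural number and let P(z) be a non-zero complex polynomial with deg P ≤ n−1. If P has exactly k distinct roots among the n-th roots of unity, then w(P) · (n − k) ≥ n (equivalently, w(P) ≥ n/(n−k)). -/
open Polynomial

/-!
Let `ζ` be a primitive `n`-th root of unity. For every `a ≠ 0` the values `P(a ζʲ)`,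
`j = 0, 1, 2, …`, are combinations of the `w(P)` geometric progressions `(ζⁱ)ʲ`, `i` in the support
of `P`, whose ratios are distinct. By the Vandermonde determinant they cannot vanish for `w(P)`
consecutive values of `j`. So among any `w(P)` cyclically consecutive `n`-th roots of unity there is
a non-root of `P`. There are `n` such runs and each non-root lies in at most `w(P)` of them, so
there are at least `n / w(P)` non-roots.
-/

section

variable {R : Type*} [CommRing R] [IsDomain R]

lemma eq_zero_of_forall_sum_mul_pow_eq_zero {ι : Type*} {s : Finset ι} {c x : ι → R}
    (hx : Set.InjOn x s) (h : ∀ j < s.card, ∑ i ∈ s, c i * x i ^ j = 0) :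
    ∀ i ∈ s, c i = 0 := by
  let e : Fin s.card ≃ s := s.equivFin.symm
  have hinj : Function.Injective fun l => x (e l) :=
    (Set.injOn_iff_injective.mp hx).comp e.injective
  have hsum (j : Fin s.card) : ∑ l, c (e l) * x (e l) ^ (j : ℕ) = 0 := by
    rw [e.sum_comp fun i => c i * x i ^ (j : ℕ), Finset.sum_coe_sort s fun i => c i * x i ^ (j : ℕ)]
    exact h j j.isLt
  have hzero := Matrix.eq_zero_of_forall_pow_sum_mul_pow_eq_zero hinj hsum
  intro i hi
  simpa [e] using congrFun hzero (s.equivFin ⟨i, hi⟩)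

lemma exists_eval_mul_pow_ne_zero {P : R[X]} (hP : P ≠ 0) {a ζ : R} (ha : a ≠ 0)
    (hζ : Set.InjOn (ζ ^ ·) (P.support : Set ℕ)) :
    ∃ j < P.support.card, P.eval (a * ζ ^ j) ≠ 0 := by
  by_contra! hroot
  have hsum (j : ℕ) (hj : j < P.support.card) :
      ∑ i ∈ P.support, P.coeff i * a ^ i * (ζ ^ i) ^ j = 0 := by
    rw [← hroot j hj, eval_eq_sum, sum_def]
    exact Finset.sum_congr rfl fun i _ => by ring
  obtain ⟨i, hi⟩ := nonempty_support_iff.mpr hP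
  exact mul_ne_zero (mem_support_iff.mp hi) (pow_ne_zero i ha)
    (eq_zero_of_forall_sum_mul_pow_eq_zero hζ hsum i hi)

variable {n : ℕ} {ζ : R}

lemma card_filter_mul_right_nthRootsFinset_le (hζ : ζ ∈ nthRootsFinset n (1 : R)) (p : R → Prop)
    [DecidablePred p] :
    {a ∈ nthRootsFinset n (1 : R) | p (a * ζ)}.card ≤
      {z ∈ nthRootsFinset n (1 : R) | p z}.card := by
  refine Finset.card_le_card_of_injOn (· * ζ) (fun a ha => ?_)
    (mul_left_injective₀ (ne_zero_of_mem_nthRootsFinset one_ne_zero hζ)).injOn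
  obtain ⟨hroot, hp⟩ := Finset.mem_filter.mp ha
  exact Finset.mem_filter.mpr ⟨mul_one (1 : R) ▸ mul_mem_nthRootsFinset hroot hζ, hp⟩

variable [DecidableEq R] {P : R[X]}

lemma le_card_support_mul_card_filter_eval_ne_zero (hζ : IsPrimitiveRoot ζ n) (hP : P ≠ 0)
    (hinj : Set.InjOn (ζ ^ ·) (P.support : Set ℕ)) :
    n ≤ P.support.card * {z ∈ nthRootsFinset n (1 : R) | P.eval z ≠ 0}.card := by
  obtain rfl | hn := n.eq_zero_or_pos
  · exact Nat.zero_le _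
  have hpow (j : ℕ) : ζ ^ j ∈ nthRootsFinset n (1 : R) := by
    rw [mem_nthRootsFinset hn, pow_right_comm, hζ.pow_eq_one, one_pow]
  have hcover : nthRootsFinset n (1 : R) ⊆ (Finset.range P.support.card).biUnion fun j =>
      {a ∈ nthRootsFinset n (1 : R) | P.eval (a * ζ ^ j) ≠ 0} := fun a ha => by
    obtain ⟨j, hj, heval⟩ :=
      exists_eval_mul_pow_ne_zero hP (ne_zero_of_mem_nthRootsFinset one_ne_zero ha) hinj
    exact Finset.mem_biUnion.mpr ⟨j, Finset.mem_range.mpr hj, Finset.mem_filter.mpr ⟨ha, heval⟩⟩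
  calc
    n = (nthRootsFinset n (1 : R)).card := hζ.card_nthRootsFinset.symm
    _ ≤ ((Finset.range P.support.card).biUnion fun j =>
        {a ∈ nthRootsFinset n (1 : R) | P.eval (a * ζ ^ j) ≠ 0}).card :=
      Finset.card_le_card hcover
    _ ≤ (Finset.range P.support.card).card *
        {z ∈ nthRootsFinset n (1 : R) | P.eval z ≠ 0}.card :=
      Finset.card_biUnion_le_card_mul _ _ _ fun j _ =>
        card_filter_mul_right_nthRootsFinset_le (hpow j) (P.eval · ≠ 0)
    _ = P.support.card * {z ∈ nthRootsFinset n (1 : R) | P.eval z ≠ 0}.card := by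
      rw [Finset.card_range]

theorem weight_mul_ge_general (hζ : IsPrimitiveRoot ζ n) (hP : P ≠ 0) (hdeg : P.natDegree < n) :
    n ≤ P.support.card * (n - {z ∈ nthRootsFinset n (1 : R) | P.eval z = 0}.card) := by
  have hinj : Set.InjOn (ζ ^ ·) (P.support : Set ℕ) := fun i hi j hj =>
    hζ.pow_inj ((le_natDegree_of_mem_supp i hi).trans_lt hdeg)
      ((le_natDegree_of_mem_supp j hj).trans_lt hdeg)
  have hcard := Finset.card_filter_add_card_filter_not (s := nthRootsFinset n (1 : R))
    (P.eval · = 0)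
  rw [hζ.card_nthRootsFinset] at hcard
  rw [← Nat.eq_sub_of_add_eq' hcard]
  exact le_card_support_mul_card_filter_eval_ne_zero hζ hP hinj

end

/-- Let `n ≥ 1` and let `P` be a non-zero complex polynomial of degree at most `n - 1`
having exactly `k` distinct roots among the `n`-th roots of unity. Then
`w(P) * (n - k) ≥ n`, where `w(P)` is the number of non-zero coefficients of `P`. -/
theorem weight_mul_ge (n : ℕ) (hn : 1 ≤ n)
    (P : Polynomial ℂ) (hP : P ≠ 0) (hdeg : P.natDegree ≤ n - 1)
    (k : ℕ)
    (hk : k = (((Polynomial.nthRoots n (1 : ℂ)).toFinset).filter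
      (fun z => P.eval z = 0)).card) :
    P.support.card * (n - k) ≥ n := by
  rw [hk, ← nthRootsFinset_def]
  exact weight_mul_ge_general (Complex.isPrimitiveRoot_exp n (by omega)) hP (by omega)
end

section
/- Let n ≥ 1 and let P(z) = p_0 + p_1 z + ... + p_{n−1} z^{n−1} be a non-zero complex polynomial. Let C be the n×n circulant matrix generated by the coefficients of P. Then w(P) · rank(C) ≥ n. -/
/-!
Choose a maximal linearly independent set of columns of `C`; it has at most `rank C` elements. Every
other column has a non-zero multiple in the span of the chosen ones, so a row that vanishes on the
chosen columns vanishes everywhere. No row of `C` is zero, so the supports of the chosen columns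
cover all `n` rows, and each support has `w(P)` elements because every column of `C` is a
permutation of `p`.
-/

open Matrix

theorem hammingNorm_comp_equiv {ι κ : Type*} [Fintype ι] [Fintype κ] {β : κ → Type*}
    [∀ k, Zero (β k)] [∀ k, DecidableEq (β k)] (x : ∀ k, β k) (e : ι ≃ κ) :
    hammingNorm (fun i ↦ x (e i)) = hammingNorm x :=
  Finset.card_equiv e (by simp)

theorem exists_linearIndepOn_forall_exists_ne_zero {ι κ R : Type*} [Ring R] [NoZeroDivisors R]
    (v : ι → κ → R) :
    ∃ s : Set ι, LinearIndepOn R v s ∧ ∀ i j, v i j ≠ 0 → ∃ k ∈ s, v k j ≠ 0 := by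
  obtain ⟨s, hs, hmax⟩ := exists_maximal_linearIndepOn R v
  refine ⟨s, hs, fun i j hij ↦ ?_⟩
  by_contra! hzero
  obtain ⟨a, ha, hmem⟩ := hmax i fun hi ↦ hij (hzero i hi)
  have hspan : Submodule.span R (v '' s) ≤ LinearMap.ker (LinearMap.proj j) :=
    Submodule.span_le.2 (Set.forall_mem_image.2 hzero)
  have hsmul : a * v i j = 0 := hspan hmem
  exact mul_ne_zero ha hij hsmul

section SparseColumns

variable {R m n : Type*} [CommRing R]

theorem card_le_rank_of_linearIndepOn_col [Nontrivial R] [Fintype n] {A : Matrix m n R}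
    {s : Finset n} (hs : LinearIndepOn R A.col s) : s.card ≤ A.rank := by
  have : Module.Finite R (Submodule.span R (Set.range A.col)) :=
    .span_of_finite R (Set.finite_range A.col)
  have hcols : LinearIndependent R fun k : s ↦
      (⟨A.col k, Submodule.subset_span ⟨k, rfl⟩⟩ : Submodule.span R (Set.range A.col)) :=
    LinearIndependent.of_comp (Submodule.subtype _) hs
  simpa [rank_eq_finrank_span_cols] using hcols.fintype_card_le_finrank

theorem card_row_ne_zero_le_mul_rank [IsDomain R] [DecidableEq R] [Fintype m] [Fintype n]
    (A : Matrix m n R) {w : ℕ} (hw : ∀ j, hammingNorm (A.col j) ≤ w) :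
    (Finset.univ.filter fun i ↦ A.row i ≠ 0).card ≤ w * A.rank := by
  classical
  obtain ⟨s, hs, hsupp⟩ := exists_linearIndepOn_forall_exists_ne_zero A.col
  have hcover : (Finset.univ.filter fun i ↦ A.row i ≠ 0) ⊆
      s.toFinset.biUnion fun j ↦ Finset.univ.filter fun i ↦ A.col j i ≠ 0 := by
    intro i hi
    obtain ⟨j, hij⟩ := Function.ne_iff.1 ((Finset.mem_filter_univ i).1 hi)
    obtain ⟨k, hk, hik⟩ := hsupp j i hij
    exact Finset.mem_biUnion.2 ⟨k, Set.mem_toFinset.2 hk, (Finset.mem_filter_univ i).2 hik⟩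
  calc (Finset.univ.filter fun i ↦ A.row i ≠ 0).card
      ≤ (s.toFinset.biUnion fun j ↦ Finset.univ.filter fun i ↦ A.col j i ≠ 0).card :=
        Finset.card_le_card hcover
    _ ≤ s.toFinset.card * w := Finset.card_biUnion_le_card_mul _ _ _ fun j _ ↦ hw j
    _ ≤ A.rank * w := by
        gcongr
        exact card_le_rank_of_linearIndepOn_col (by simpa using hs)
    _ = w * A.rank := mul_comm _ _

end SparseColumns

theorem weight_mul_rank_ge_general {G R : Type*} [AddGroup G] [Fintype G] [CommRing R] [IsDomain R]
    [DecidableEq R] (p : G → R) (hp : p ≠ 0) (C : Matrix G G R)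
    (hC : ∀ i j, C i j = p (j - i)) :
    hammingNorm p * C.rank ≥ Fintype.card G := by
  have hrow (i : G) : C.row i ≠ 0 := by
    obtain ⟨k, hk⟩ := Function.ne_iff.1 hp
    exact Function.ne_iff.2 ⟨k + i, by simpa [hC] using hk⟩
  have hcol (j : G) : hammingNorm (C.col j) = hammingNorm p := by
    have hshift : C.col j = fun i ↦ p (Equiv.subLeft j i) := funext fun i ↦ hC i j
    exact (congrArg hammingNorm hshift).trans (hammingNorm_comp_equiv p _)
  simpa [hrow] using card_row_ne_zero_le_mul_rank C fun j ↦ (hcol j).le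

/-- Let `n ≥ 1` and `P(z) = p_0 + p_1 z + ⋯ + p_{n-1} z^{n-1}` a non-zero polynomial,
and let `C` be the circulant matrix `C i j = p ((j - i) mod n)`. Then
`w(P) * rank C ≥ n`, where `w(P)` is the number of non-zero coefficients of `P`. -/
theorem weight_mul_rank_ge (n : ℕ) (hn : 1 ≤ n)
    (p : Fin n → ℂ) (hp : p ≠ 0)
    (C : Matrix (Fin n) (Fin n) ℂ)
    (hC : ∀ i j : Fin n, C i j = p (j - i)) :
    (Finset.univ.filter (fun i : Fin n => p i ≠ 0)).card * C.rank ≥ n := by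
  have : NeZero n := ⟨Nat.one_le_iff_ne_zero.1 hn⟩
  simpa [hammingNorm] using weight_mul_rank_ge_general p hp C hC
end

section
/- Let n ≥ 1 and let P(z) = p_0 + p_1 z + ... + p_{n−1} z^{n−1} be a non-zero complex polynomial. Let C be the n×n circulant matrix generated by the coefficients of P and set r = rank(C). If w(P) · r = n, then r divides n and the support of the coefficient vector (p_0, ..., p_{n−1}) consists exactly of the indices congruent to some fixed l modulo r with 0 ≤ l ≤ r−1; equivalently, P(z) = z^l Q(z^r) for some complex polynomial Q(z) = q_0 + q_1 z + ... + q_{n/r − 1} z^{n/r − 1} with all coefficients q_0, ..., q_{n/r−1} non-zero. -/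
open Matrix Polynomial

/-!
Extend the coefficient vector to an `n`-periodic sequence on `ℕ`. A run of `g` zeros followed by a
non-zero term produces an upper triangular submatrix of `C` of size `g + 1` with that term on the
diagonal, so `g < r`: each window of length `r` meets the support. When `w(P) * r = n`, a whole
period splits into `w(P)` such windows, starting anywhere, and contains only `w(P)` support points;
hence each window contains exactly one. Sliding a window by one step shows that the support is
`r`-periodic; having one point in `[0, r)`, it is a single residue class modulo `r`.
-/

/-- The `n`-periodic sequence whose first `n` terms are the entries of `p`; it replaces cyclic
indexing by indexing over `ℕ`. -/
def periodicExtension {α : Type*} {n : ℕ} [NeZero n] (p : Fin n → α) (k : ℕ) : α :=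
  p (Fin.ofNat n k)

section PeriodicExtension

variable {α : Type*} {n : ℕ} [NeZero n] (p : Fin n → α)

lemma periodicExtension_val (i : Fin n) : periodicExtension p i = p i := by
  simp [periodicExtension]

lemma periodic_periodicExtension : Function.Periodic (periodicExtension p) n := fun k => by
  simp [periodicExtension, Fin.ofNat]

lemma exists_periodicExtension_add_eq (a : ℕ) (i : Fin n) :
    ∃ k, periodicExtension p (a + k) = p i :=
  ⟨(i - Fin.ofNat n a : Fin n), by rw [periodicExtension, ← Fin.ofNat_add, add_sub_cancel]⟩

lemma circulant_transpose_neg_apply (i j : ℕ) :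
    (circulant p)ᵀ (-Fin.ofNat n i) (Fin.ofNat n j) = periodicExtension p (j + i) := by
  rw [transpose_apply, circulant_apply, sub_neg_eq_add, Fin.ofNat_add, periodicExtension]
  congr 1
  ext
  simp [Fin.ofNat]

lemma count_periodicExtension_ne_zero [Zero α] [DecidableEq α] :
    Nat.count (fun k => periodicExtension p k ≠ 0) n = (Finset.univ.filter (p · ≠ 0)).card := by
  rw [Nat.count_eq_card_filter_range, Finset.card_filter, Finset.card_filter, Finset.sum_range]
  simp only [periodicExtension_val]

end PeriodicExtension

section CirculantRank

variable {R : Type*} [CommRing R] [IsDomain R] {n : ℕ} [NeZero n] {p : Fin n → R}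

lemma lt_rank_circulant_transpose_of_zero_run {s g : ℕ}
    (hzero : ∀ i < g, periodicExtension p (s + i) = 0) (hne : periodicExtension p (s + g) ≠ 0) :
    g < (circulant p)ᵀ.rank := by
  let T : Matrix (Fin (g + 1)) (Fin (g + 1)) R := (circulant p)ᵀ.submatrix
    (fun i => -Fin.ofNat n (s + (g - i))) (fun j => Fin.ofNat n j)
  have hT (i j : Fin (g + 1)) : T i j = periodicExtension p (j + (s + (g - i))) :=
    circulant_transpose_neg_apply p _ _
  have hupper : T.IsUpperTriangular := fun i j (hji : j < i) => by
    rw [hT, show (j : ℕ) + (s + (g - i)) = s + (g + j - i) by omega]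
    exact hzero _ (by omega)
  have hdiag (i : Fin (g + 1)) : T i i = periodicExtension p (s + g) := by
    rw [hT, show (i : ℕ) + (s + (g - i)) = s + g by omega]
  have hdet : T.det ≠ 0 := by
    rw [det_of_isUpperTriangular hupper]
    exact Finset.prod_ne_zero_iff.mpr fun i _ => hdiag i ▸ hne
  calc g < Fintype.card (Fin (g + 1)) := by simp
    _ = T.rank := (rank_of_det_ne_zero hdet).symm
    _ ≤ (circulant p)ᵀ.rank := rank_submatrix_le _ _ _

lemma exists_lt_rank_circulant_transpose_ne_zero (hp : p ≠ 0) (a : ℕ) :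
    ∃ i < (circulant p)ᵀ.rank, periodicExtension p (a + i) ≠ 0 := by
  classical
  have hex : ∃ k, periodicExtension p (a + k) ≠ 0 := by
    obtain ⟨i, hi⟩ := Function.ne_iff.mp hp
    obtain ⟨k, hk⟩ := exists_periodicExtension_add_eq p a i
    exact ⟨k, hk ▸ hi⟩
  have hzero (i : ℕ) (hi : i < Nat.find hex) : periodicExtension p (a + i) = 0 :=
    not_not.mp (Nat.find_min hex hi)
  exact ⟨Nat.find hex, lt_rank_circulant_transpose_of_zero_run hzero (Nat.find_spec hex),
    Nat.find_spec hex⟩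

end CirculantRank

section Count

variable {S : ℕ → Prop} [DecidablePred S] {n r : ℕ}

lemma count_add_of_periodic (hS : Function.Periodic S n) (a : ℕ) :
    Nat.count S (a + n) = Nat.count S a + Nat.count S n := by
  simp [Nat.count_add', hS _]

lemma count_lt_count_add_of_exists {a : ℕ} (h : ∃ i < r, S (a + i)) :
    Nat.count S a < Nat.count S (a + r) := by
  obtain ⟨i, hi, hSi⟩ := h
  exact (Nat.count_monotone S (a.le_add_right i)).trans_lt (Nat.count_strict_mono hSi (by omega))

lemma count_add_le_count_add_mul (h : ∀ a, ∃ i < r, S (a + i)) (a k : ℕ) :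
    Nat.count S a + k ≤ Nat.count S (a + k * r) := by
  induction k with
  | zero => simp
  | succ k ih =>
    calc
      _ ≤ Nat.count S (a + k * r) + 1 := Nat.succ_le_succ ih
      _ ≤ Nat.count S (a + k * r + r) := count_lt_count_add_of_exists (h _)
      _ = Nat.count S (a + (k + 1) * r) := by rw [add_one_mul, add_assoc]

lemma count_add_eq_succ_of_count_mul_eq (hn : n ≠ 0) (hS : Function.Periodic S n)
    (h : ∀ a, ∃ i < r, S (a + i)) (hcount : Nat.count S n * r = n) (a : ℕ) :
    Nat.count S (a + r) = Nat.count S a + 1 := by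
  obtain ⟨w, hw⟩ : ∃ w, Nat.count S n = w + 1 :=
    Nat.exists_eq_succ_of_ne_zero fun h0 => hn (by rw [← hcount, h0, zero_mul])
  have hle : Nat.count S (a + r) + w ≤ Nat.count S a + (w + 1) := calc
    _ ≤ Nat.count S (a + r + w * r) := count_add_le_count_add_mul h _ _
    _ = Nat.count S (a + n) := by
      rw [← hcount, hw]
      congr 1
      ring
    _ = Nat.count S a + (w + 1) := by rw [count_add_of_periodic hS, hw]
  have hlt := count_lt_count_add_of_exists (h a)
  omega

lemma periodic_of_count_add_eq_succ (h : ∀ a, Nat.count S (a + r) = Nat.count S a + 1) :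
    Function.Periodic S r := fun a => propext <| by
  rw [← Nat.count_lt_count_succ_iff (p := S), ← Nat.count_lt_count_succ_iff (p := S),
    add_right_comm, h, h, add_lt_add_iff_right]

lemma exists_forall_iff_mod_eq (h : ∀ a, Nat.count S (a + r) = Nat.count S a + 1) :
    ∃ l < r, ∀ k, S k ↔ k % r = l := by
  have hr : Nat.count S r = 1 := by simpa using h 0
  obtain ⟨l, hl, hSl⟩ := Nat.count_ne_iff_exists.mp (hr ▸ one_ne_zero : Nat.count S r ≠ 0)
  have count_eq_zero {j : ℕ} (hj : j < r) (hSj : S j) : Nat.count S j = 0 := by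
    have hlt := Nat.count_strict_mono hSj hj
    omega
  refine ⟨l, hl, fun k => ?_⟩
  rw [← (periodic_of_count_add_eq_succ h).map_mod_nat k]
  refine ⟨fun hSk => ?_, fun hk => hk ▸ hSl⟩
  have hk : k % r < r := Nat.mod_lt k (by omega)
  exact Nat.count_injective hSk hSl ((count_eq_zero hk hSk).trans (count_eq_zero hl hSl).symm)

end Count

section Coefficients

lemma exists_eq_X_pow_mul_comp_X_pow {R : Type*} [CommSemiring R] {P : R[X]} {r l : ℕ}
    (hr : 0 < r) (hP : ∀ i, P.coeff i ≠ 0 → i % r = l) :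
    ∃ Q : R[X], (∀ k, Q.coeff k = P.coeff (k * r + l)) ∧ P = X ^ l * Q.comp (X ^ r) := by
  have hdvd : X ^ l ∣ P := X_pow_dvd_iff.mpr fun d hd => by
    by_contra hne
    exact hd.not_ge (hP d hne ▸ Nat.mod_le d r)
  obtain ⟨P', rfl⟩ := hdvd
  have hP' (i : ℕ) (hi : P'.coeff i ≠ 0) : r ∣ i := by
    have hmod : (i + l) % r = l := hP _ (by rwa [coeff_X_pow_mul])
    have hdivmod := Nat.div_add_mod (i + l) r
    exact ⟨(i + l) / r, by omega⟩
  refine ⟨contract r P', fun k => by rw [coeff_contract hr.ne', coeff_X_pow_mul], ?_⟩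
  rw [← expand_eq_comp_X_pow]
  congr 1
  ext i
  rw [coeff_expand hr]
  split_ifs with hi
  · rw [coeff_contract hr.ne', Nat.div_mul_cancel hi]
  · exact not_not.mp (mt (hP' i) hi)

lemma ofFn_eq_sum_C_mul_X_pow {R : Type*} [Semiring R] [DecidableEq R] {n : ℕ} (p : Fin n → R) :
    ofFn n p = ∑ i : Fin n, C (p i) * X ^ (i : ℕ) := by
  simp only [ofFn_eq_sum_monomial, C_mul_X_pow_eq_monomial]

lemma exists_ofFn_eq_X_pow_mul_comp_X_pow {R : Type*} [CommSemiring R] [DecidableEq R] {n r l : ℕ}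
    {p : Fin n → R} (hrn : r ∣ n) (hl : l < r) (hp : ∀ i, p i ≠ 0 ↔ (i : ℕ) % r = l) :
    ∃ Q : R[X], Q.natDegree ≤ n / r - 1 ∧ (∀ k < n / r, Q.coeff k ≠ 0) ∧
      ofFn n p = X ^ l * Q.comp (X ^ r) := by
  have hr : 0 < r := by omega
  have hmod (i : ℕ) (hi : (ofFn n p).coeff i ≠ 0) : i % r = l := by
    obtain hin | hni := lt_or_ge i n
    · rw [ofFn_coeff_eq_val_of_lt p hin] at hi
      exact (hp _).mp hi
    · exact absurd (ofFn_coeff_eq_zero_of_ge p hni) hi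
  obtain ⟨Q, hcoeff, hQ⟩ := exists_eq_X_pow_mul_comp_X_pow hr hmod
  refine ⟨Q, natDegree_le_iff_coeff_eq_zero.mpr fun k hk => ?_, fun k hk => ?_, hQ⟩
  · have hnk : n ≤ k * r := (Nat.div_le_iff_le_mul_of_dvd hr.ne' hrn).mp (by omega)
    rw [hcoeff, ofFn_coeff_eq_zero_of_ge p (by omega)]
  · have hkn : k * r + l < n := by
      have hle := Nat.mul_le_of_le_div r (k + 1) n hk
      rw [add_one_mul] at hle
      omega
    rw [hcoeff, ofFn_coeff_eq_val_of_lt p hkn, hp]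
    exact (Nat.mul_add_mod' k r l).trans (Nat.mod_eq_of_lt hl)

end Coefficients

theorem equality_support_structure_general {R : Type*} [CommRing R] [IsDomain R] [DecidableEq R]
    (n : ℕ) (p : Fin n → R) (hp : p ≠ 0)
    (P : R[X]) (hP : P = ∑ i : Fin n, Polynomial.C (p i) * X ^ (i : ℕ))
    (C : Matrix (Fin n) (Fin n) R) (hC : ∀ i j : Fin n, C i j = p (j - i))
    (r : ℕ) (hr : r = C.rank)
    (heq : (Finset.univ.filter (fun i : Fin n => p i ≠ 0)).card * r = n) :
    r ∣ n ∧ ∃ l : ℕ, l < r ∧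
      (∀ i : Fin n, p i ≠ 0 ↔ (i : ℕ) % r = l) ∧
      ∃ Q : R[X], Q.natDegree ≤ n / r - 1 ∧
        (∀ i : ℕ, i < n / r → Q.coeff i ≠ 0) ∧
        P = X ^ l * Q.comp (X ^ r) := by
  have hn : n ≠ 0 := by
    rintro rfl
    exact hp (Subsingleton.elim _ _)
  have : NeZero n := ⟨hn⟩
  obtain rfl : C = (circulant p)ᵀ := Matrix.ext hC
  have hwindow (a : ℕ) : ∃ i < r, periodicExtension p (a + i) ≠ 0 :=
    hr ▸ exists_lt_rank_circulant_transpose_ne_zero hp a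
  have hcount := count_add_eq_succ_of_count_mul_eq (S := (periodicExtension p · ≠ 0)) hn
    ((periodic_periodicExtension p).comp (· ≠ 0)) hwindow
    (by rwa [count_periodicExtension_ne_zero])
  obtain ⟨l, hl, hsupp⟩ := exists_forall_iff_mod_eq hcount
  have hp_iff (i : Fin n) : p i ≠ 0 ↔ (i : ℕ) % r = l := by
    rw [← hsupp, periodicExtension_val]
  have hrn : r ∣ n := Dvd.intro_left _ heq
  rw [← ofFn_eq_sum_C_mul_X_pow] at hP
  exact ⟨hrn, l, hl, hp_iff, hP ▸ exists_ofFn_eq_X_pow_mul_comp_X_pow hrn hl hp_iff⟩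

/-- Let `n ≥ 1`, `P(z) = p_0 + p_1 z + ⋯ + p_{n-1} z^{n-1}` a non-zero polynomial,
`C` the circulant matrix `C i j = p ((j - i) mod n)` and `r = rank C`. If
`w(P) * r = n`, then `r ∣ n` and the support of `(p_0, …, p_{n-1})` consists exactly
of the indices congruent to some fixed `l` modulo `r` with `0 ≤ l ≤ r - 1`;
equivalently `P(z) = z^l Q(z^r)` for a polynomial
`Q(z) = q_0 + q_1 z + ⋯ + q_{n/r - 1} z^{n/r - 1}` all of whose coefficients
`q_0, …, q_{n/r - 1}` are non-zero. -/
theorem equality_support_structure (n : ℕ) (hn : 1 ≤ n)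
    (p : Fin n → ℂ) (hp : p ≠ 0)
    (P : Polynomial ℂ)
    (hP : P = ∑ i : Fin n, Polynomial.C (p i) * Polynomial.X ^ (i : ℕ))
    (C : Matrix (Fin n) (Fin n) ℂ)
    (hC : ∀ i j : Fin n, C i j = p (j - i))
    (r : ℕ) (hr : r = C.rank)
    (heq : (Finset.univ.filter (fun i : Fin n => p i ≠ 0)).card * r = n) :
    r ∣ n ∧ ∃ l : ℕ, l < r ∧
      (∀ i : Fin n, p i ≠ 0 ↔ (i : ℕ) % r = l) ∧
      ∃ Q : Polynomial ℂ, Q.natDegree ≤ n / r - 1 ∧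
        (∀ i : ℕ, i < n / r → Q.coeff i ≠ 0) ∧
        P = Polynomial.X ^ l * Q.comp (Polynomial.X ^ r) :=
  equality_support_structure_general n p hp P hP C hC r hr heq
end

section
/- Let n ≥ 1 be a natural number, ω = e^{2πi/n}, and let P(z) be a non-zero complex polynomial with deg P ≤ n−1 having exactly k distinct roots among the n-th roots of unity. Then w(P) · (n − k) = n if and only if there exist a non-zero complex number c, a divisor r of n, an integer l with 0 ≤ l ≤ r−1, and an integer j with 0 ≤ j ≤ n−1, such that P(z) = c · D_{n,r,l}(ω^j z). -/
/-!
The exponents `s` with `P(ω^s) ≠ 0` form an `n`-periodic set, with `r = n - k` elements per period.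
By a Vandermonde argument `P` has a nonroot among any `w = w(P)` consecutive powers of `ω`. If
`r w = n`, a period is tiled by `r` such windows, from any starting point, so every window contains
exactly one nonroot, and all of them lie in one residue class modulo `w`. A rotation moves this
class to `0`. The rotated polynomial then vanishes wherever `1 + z^r + ⋯ + z^{(w-1)r}` does, so it
is a multiple `A(z) (1 + z^r + ⋯ + z^{(w-1)r})` with `deg A < r`. Such a product has `w(A) w`
monomials, hence `w(A) = 1`.
-/

open Polynomial

/-- The polynomial `D_{n,r,l}(z) = z^l (1 + z^r + z^{2r} + ⋯ + z^{(n/r - 1) r})`. -/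
noncomputable def Dpoly (n r l : ℕ) : Polynomial ℂ :=
  Polynomial.X ^ l * ∑ i ∈ Finset.range (n / r), Polynomial.X ^ (i * r)

section Count

variable {p : ℕ → Prop} [DecidablePred p] {n r w s t : ℕ}

lemma count_add_period (hp : Function.Periodic p n) (s : ℕ) :
    Nat.count p (s + n) = Nat.count p s + Nat.count p n := by
  have hshift (k : ℕ) : p (k + n) = p k := hp k
  simp only [Nat.count_add', hshift]

lemma count_period_shift (hp : Function.Periodic p n) (j : ℕ) :
    Nat.count (fun s ↦ p (j + s)) n = Nat.count p n :=
  Nat.add_left_cancel ((Nat.count_add p j n).symm.trans (count_add_period hp j))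

lemma count_add_eq_add_one_of_window (hp : Function.Periodic p (r * w)) (hr : 0 < r)
    (hcount : Nat.count p (r * w) = r) (hwindow : ∀ s, ∃ x < w, p (s + x)) (s : ℕ) :
    Nat.count p (s + w) = Nat.count p s + 1 := by
  have hlt (s : ℕ) : Nat.count p s + 1 ≤ Nat.count p (s + w) := by
    obtain ⟨x, hx, hpx⟩ := hwindow s
    exact (Nat.count_monotone p (Nat.le_add_right s x)).trans_lt
      (Nat.count_strict_mono hpx (Nat.add_lt_add_left hx s))
  have hwindows (i s : ℕ) : Nat.count p s + i ≤ Nat.count p (s + i * w) := by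
    induction i with
    | zero => simp
    | succ i ih =>
      have := hlt (s + i * w)
      rw [Nat.succ_mul, ← add_assoc s]
      omega
  refine le_antisymm ?_ (hlt s)
  -- The remaining `r - 1` windows of a period take up at least `r - 1` of its `r` elements.
  have hrest := hwindows (r - 1) (s + w)
  have hperiod := count_add_period hp s
  rw [add_assoc, add_comm w, ← Nat.succ_mul, Nat.succ_eq_add_one, Nat.sub_add_cancel hr] at hrest
  omega

lemma modEq_of_count_add_eq_add_one (hone : ∀ s, Nat.count p (s + w) = Nat.count p s + 1)
    (hs : p s) (ht : p t) : s ≡ t [MOD w] := by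
  have hp : Function.Periodic p w := fun s ↦ by
    -- Shifting a window by one exchanges `s` for `s + w`.
    have h := hone (s + 1)
    rw [add_right_comm, Nat.count_succ, Nat.count_succ, hone] at h
    grind
  have hw : 0 < w := Nat.pos_of_ne_zero fun h ↦ by simpa [h] using hone 0
  have hfirst {s : ℕ} (hs : p s) : p (s % w) ∧ Nat.count p (s % w) = 0 := by
    have hmod : p (s % w) := by rwa [hp.map_mod_nat]
    have hlt := Nat.count_strict_mono hmod (Nat.mod_lt s hw)
    have hfirst := hone 0
    simp only [zero_add, Nat.count_zero] at hfirst
    exact ⟨hmod, by omega⟩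
  exact Nat.count_injective (hfirst hs).1 (hfirst ht).1 ((hfirst hs).2.trans (hfirst ht).2.symm)

lemma count_dvd_mul (hw : 0 < w) (r : ℕ) : Nat.count (w ∣ ·) (r * w) = r := by
  have h := Nat.count_modEq_card (r * w) hw 0
  simpa [Nat.modEq_zero_iff_dvd, hw] using h

end Count

section Semiring

variable {R : Type*} [Semiring R]

lemma card_support_add_mul_X_pow {P : R[X]} {N : ℕ} (hP : P.degree < N) (Q : R[X]) :
    (P + Q * X ^ N).support.card = P.support.card + Q.support.card := by
  have hP' := degree_lt_iff_coeff_zero P N |>.mp hP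
  have hdisj : Disjoint P.support (Q.support.map (addRightEmbedding N)) := by
    rw [Finset.disjoint_left]
    intro m hm hmQ
    obtain ⟨i, -, rfl⟩ := Finset.mem_map.mp hmQ
    exact mem_support_iff.mp hm (hP' _ (Nat.le_add_left N i))
  have hsupp : (P + Q * X ^ N).support = P.support.disjUnion _ hdisj := by
    ext m
    rcases lt_or_ge m N with hm | hm
    · have hne (i : ℕ) : i + N ≠ m := by omega
      simp [coeff_mul_X_pow', hm.not_ge, hne]
    · obtain ⟨i, rfl⟩ := Nat.exists_eq_add_of_le' hm
      simp [hP' _ hm]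
  rw [hsupp, Finset.card_disjUnion, Finset.card_map]

/-- The polynomial `1 + z^r + z^{2r} + ⋯ + z^{(w-1)r}`, whose coefficient sequence is a Dirac comb
with `w` teeth at distance `r`; `D_{n,r,l}(z)` is `z^l` times the comb with `w = n / r`. -/
noncomputable def diracComb (R : Type*) [Semiring R] (r w : ℕ) : R[X] :=
  ∑ i ∈ Finset.range w, X ^ (i * r)

lemma mul_diracComb_succ (P : R[X]) (r w : ℕ) :
    P * diracComb R r (w + 1) = P * diracComb R r w + P * X ^ (w * r) := by
  rw [diracComb, Finset.sum_range_succ, mul_add, diracComb]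

lemma degree_mul_diracComb_lt {P : R[X]} {r : ℕ} (hP : P.degree < r) (w : ℕ) :
    (P * diracComb R r w).degree < (w * r : ℕ) := by
  induction w with
  | zero => simp [diracComb]
  | succ w ih =>
    rw [degree_lt_iff_coeff_zero] at hP ih ⊢
    intro m hm
    rw [Nat.succ_mul] at hm
    obtain ⟨i, rfl⟩ := Nat.exists_eq_add_of_le' (show w * r ≤ m by omega)
    rw [mul_diracComb_succ, coeff_add, coeff_mul_X_pow, ih _ (by omega), hP _ (by omega), add_zero]

lemma card_support_mul_diracComb {P : R[X]} {r : ℕ} (hP : P.degree < r) (w : ℕ) :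
    (P * diracComb R r w).support.card = P.support.card * w := by
  induction w with
  | zero => simp [diracComb]
  | succ w ih =>
    rw [mul_diracComb_succ, card_support_add_mul_X_pow (degree_mul_diracComb_lt hP w), ih,
      Nat.mul_succ]

lemma support_comp_C_mul_X [NoZeroDivisors R] {a : R} (ha : a ≠ 0) (P : R[X]) :
    (P.comp (C a * X)).support = P.support := by
  ext m
  simp [pow_ne_zero m ha]

end Semiring

section CommSemiring

variable {R : Type*} [CommSemiring R]

lemma periodic_eval_pow_ne_zero {ω : R} {n : ℕ} (hω : IsPrimitiveRoot ω n) (P : R[X]) :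
    Function.Periodic (fun s ↦ P.eval (ω ^ s) ≠ 0) n := fun s ↦ by
  simp only [pow_add, hω.pow_eq_one, mul_one]

lemma card_support_diracComb_comp [NoZeroDivisors R] {c a : R} (hc : c ≠ 0) (ha : a ≠ 0)
    {r l : ℕ} (hl : l < r) (w : ℕ) :
    (C c * (X ^ l * diracComb R r w).comp (C a * X)).support.card = w := by
  have hdeg : (C c * X ^ l).degree < (r : WithBot ℕ) := by
    rw [degree_C_mul_X_pow l hc]
    exact mod_cast hl
  rw [← C_comp (p := C a * X), ← mul_comp, support_comp_C_mul_X ha, ← mul_assoc,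
    card_support_mul_diracComb hdeg, support_C_mul_X_pow l hc, Finset.card_singleton, one_mul]

end CommSemiring

lemma diracComb_mul_X_pow_sub_one {R : Type*} [Ring R] (r w : ℕ) :
    diracComb R r w * (X ^ r - 1) = X ^ (r * w) - 1 := by
  simp only [diracComb, mul_comm _ r, pow_mul, geom_sum_mul]

lemma exists_pow_mul_pow_eq_one {M : Type*} [CommMonoid M] {ω : M} {n : ℕ}
    (hω : IsPrimitiveRoot ω n) (hn : 0 < n) (s : ℕ) : ∃ j < n, ω ^ s * ω ^ j = 1 := by
  refine ⟨(n - 1) * s % n, Nat.mod_lt _ hn, ?_⟩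
  rw [← pow_add, hω.pow_eq_one_iff_dvd, Nat.dvd_iff_mod_eq_zero, Nat.add_mod_mod,
    Nat.add_comm, ← Nat.succ_mul, Nat.succ_eq_add_one, Nat.sub_add_cancel hn, Nat.mul_mod_right]

lemma pow_pow_eq_one_iff_dvd {M : Type*} [CommMonoid M] {ω : M} {r w : ℕ}
    (hω : IsPrimitiveRoot ω (r * w)) (hr : 0 < r) (s : ℕ) : (ω ^ s) ^ r = 1 ↔ w ∣ s := by
  rw [← pow_mul, hω.pow_eq_one_iff_dvd, mul_comm s, Nat.mul_dvd_mul_iff_left hr]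

section IsDomain

variable {R : Type*} [CommRing R] [IsDomain R] {P : R[X]} {ω : R} {n r w : ℕ}

lemma exists_lt_card_support_eval_mul_pow_ne_zero (hP : P ≠ 0) {a q : R} (ha : a ≠ 0)
    (hq : Set.InjOn (q ^ ·) (P.support : Set ℕ)) :
    ∃ x < P.support.card, P.eval (a * q ^ x) ≠ 0 := by
  by_contra! h
  let e := P.support.equivFin.symm
  have hinj : Function.Injective fun i ↦ q ^ (e i : ℕ) := hq.injective.comp e.injective
  have hsum (x : Fin P.support.card) :
      ∑ i, (P.coeff (e i) * a ^ (e i : ℕ)) * (q ^ (e i : ℕ)) ^ (x : ℕ) = 0 := by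
    rw [← h x x.2, eval_eq_sum, Polynomial.sum_def, ← P.support.sum_coe_sort, ← e.sum_comp]
    exact Fintype.sum_congr _ _ fun i ↦ by ring
  have hzero := Matrix.eq_zero_of_forall_pow_sum_mul_pow_eq_zero hinj hsum
  obtain ⟨m, hm⟩ := support_nonempty.mpr hP
  have := congrFun hzero (e.symm ⟨m, hm⟩)
  simp [ha, mem_support_iff.mp hm] at this

lemma X_pow_sub_one_dvd_of_eval_pow_eq_zero (hω : IsPrimitiveRoot ω n) (hn : 0 < n)
    (hP : ∀ s, P.eval (ω ^ s) = 0) : X ^ n - 1 ∣ P := by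
  rcases eq_or_ne P 0 with rfl | hP0
  · exact dvd_zero _
  rw [X_pow_sub_one_eq_prod hn hω]
  refine (Multiset.prod_X_sub_C_dvd_iff_le_roots hP0 _).mpr
    (Finset.val_le_iff_val_subset.mpr fun z hz ↦ ?_)
  have : NeZero n := ⟨hn.ne'⟩
  obtain ⟨s, -, rfl⟩ := hω.eq_pow_of_pow_eq_one ((mem_nthRootsFinset hn 1).mp hz)
  exact (mem_roots hP0).mpr (hP s)

lemma eval_diracComb_ne_zero_iff (hω : IsPrimitiveRoot ω (r * w)) (hn : 0 < r * w) (s : ℕ) :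
    (diracComb R r w).eval (ω ^ s) ≠ 0 ↔ w ∣ s := by
  rw [← pow_pow_eq_one_iff_dvd hω (Nat.pos_of_mul_pos_right hn)]
  constructor
  · intro h
    have hprod := congrArg (eval (ω ^ s)) (diracComb_mul_X_pow_sub_one (R := R) r w)
    have hωs : (ω ^ s) ^ (r * w) = 1 := by rw [pow_right_comm, hω.pow_eq_one, one_pow]
    simpa [h, hωs, sub_eq_zero] using hprod
  · intro h
    have : NeZero (r * w) := ⟨hn.ne'⟩
    have hn0 : (r : R) * w ≠ 0 := by exact_mod_cast hω.neZero'.ne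
    simpa [diracComb, eval_finsetSum, mul_comm _ r, pow_mul, h] using right_ne_zero_of_mul hn0

lemma diracComb_dvd_of_eval_pow_ne_zero (hω : IsPrimitiveRoot ω (r * w)) (hn : 0 < r * w)
    (hP : ∀ s, P.eval (ω ^ s) ≠ 0 → w ∣ s) : diracComb R r w ∣ P := by
  have hr := Nat.pos_of_mul_pos_right hn
  have hne : (X ^ r - 1 : R[X]) ≠ 0 := X_pow_sub_C_ne_zero hr 1
  rw [← mul_dvd_mul_iff_right hne, diracComb_mul_X_pow_sub_one]
  refine X_pow_sub_one_dvd_of_eval_pow_eq_zero hω hn fun s ↦ ?_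
  by_cases hs : P.eval (ω ^ s) = 0
  · simp [hs]
  · simp [(pow_pow_eq_one_iff_dvd hω hr s).mpr (hP s hs)]

lemma natDegree_lt_of_natDegree_mul_diracComb_lt (hP : P * diracComb R r w ≠ 0)
    (hdeg : (P * diracComb R r w).natDegree < r * w) : P.natDegree < r := by
  have hn : 0 < r * w := Nat.zero_lt_of_lt hdeg
  have hr := Nat.pos_of_mul_pos_right hn
  have h := congrArg natDegree (mul_assoc P (diracComb R r w) (X ^ r - C 1))
  rw [C_1, diracComb_mul_X_pow_sub_one, ← C_1, natDegree_mul hP (X_pow_sub_C_ne_zero hr 1),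
    natDegree_mul (left_ne_zero_of_mul hP) (X_pow_sub_C_ne_zero hn 1), natDegree_X_pow_sub_C,
    natDegree_X_pow_sub_C] at h
  omega

lemma exists_eq_C_mul_X_pow_mul_diracComb (hP : P ≠ 0) (hdeg : P.natDegree < r * w)
    (hcard : P.support.card = w) (hdvd : diracComb R r w ∣ P) :
    ∃ (c : R) (l : ℕ), c ≠ 0 ∧ l < r ∧ P = C c * (X ^ l * diracComb R r w) := by
  obtain ⟨A, rfl⟩ := exists_eq_mul_left_of_dvd hdvd
  have hA := natDegree_lt_of_natDegree_mul_diracComb_lt hP hdeg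
  have hw : w ≠ 0 := by rintro rfl; simp at hdeg
  rw [card_support_mul_diracComb (degree_le_natDegree.trans_lt (mod_cast hA)),
    Nat.mul_eq_right hw, card_support_eq_one] at hcard
  obtain ⟨l, c, hc, rfl⟩ := hcard
  rw [natDegree_C_mul_X_pow l c hc] at hA
  exact ⟨c, l, hc, hA, mul_assoc _ _ _⟩

variable [DecidableEq R]

lemma sub_card_nthRoots_eval_eq_zero (hω : IsPrimitiveRoot ω n) (P : R[X]) :
    n - {z ∈ (nthRoots n (1 : R)).toFinset | P.eval z = 0}.card =
      Nat.count (fun s ↦ P.eval (ω ^ s) ≠ 0) n := by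
  have hroots : (nthRoots n (1 : R)).toFinset = (Finset.range n).image (ω ^ ·) := by
    ext z
    simp [hω.nthRoots_eq (one_pow n)]
  rw [hroots, Finset.filter_image, Finset.card_image_of_injOn
    (hω.injOn_pow.mono (Finset.coe_subset.mpr (Finset.filter_subset _ _))),
    Nat.count_eq_card_filter_range]
  have := Finset.card_filter_add_card_filter_not (s := Finset.range n)
    fun s ↦ P.eval (ω ^ s) = 0
  rw [Finset.card_range] at this
  simp only [ne_eq]
  omega

lemma modEq_of_eval_pow_ne_zero (hω : IsPrimitiveRoot ω (r * w)) (hP : P ≠ 0)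
    (hdeg : P.natDegree < r * w) (hcard : P.support.card = w)
    (hcount : Nat.count (fun s ↦ P.eval (ω ^ s) ≠ 0) (r * w) = r) {s t : ℕ}
    (hs : P.eval (ω ^ s) ≠ 0) (ht : P.eval (ω ^ t) ≠ 0) : s ≡ t [MOD w] := by
  have hn : 0 < r * w := Nat.zero_lt_of_lt hdeg
  have hω0 : ω ≠ 0 := hω.ne_zero hn.ne'
  have hinj : Set.InjOn (ω ^ ·) (P.support : Set ℕ) := hω.injOn_pow.mono fun m hm ↦
    Finset.mem_coe.mpr (Finset.mem_range.mpr ((le_natDegree_of_mem_supp m hm).trans_lt hdeg))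
  have hwindow (s : ℕ) : ∃ x < w, P.eval (ω ^ (s + x)) ≠ 0 := by
    simpa only [hcard, pow_add] using
      exists_lt_card_support_eval_mul_pow_ne_zero hP (pow_ne_zero s hω0) hinj
  have hone := count_add_eq_add_one_of_window (periodic_eval_pow_ne_zero hω P)
    (Nat.pos_of_mul_pos_right hn) hcount hwindow
  exact modEq_of_count_add_eq_add_one hone hs ht

lemma exists_eq_diracComb_comp (hω : IsPrimitiveRoot ω (r * w)) (hP : P ≠ 0)
    (hdeg : P.natDegree < r * w) (hcard : P.support.card = w)
    (hcount : Nat.count (fun s ↦ P.eval (ω ^ s) ≠ 0) (r * w) = r) :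
    ∃ (c : R) (l j : ℕ), c ≠ 0 ∧ l < r ∧ j < r * w ∧
      P = C c * (X ^ l * diracComb R r w).comp (C (ω ^ j) * X) := by
  have hn : 0 < r * w := Nat.zero_lt_of_lt hdeg
  obtain ⟨s, hs⟩ : ∃ s, P.eval (ω ^ s) ≠ 0 := by
    by_contra! h
    have : r = 0 := by simpa [h] using hcount.symm
    simp [this] at hn
  have hωs : ω ^ s ≠ 0 := pow_ne_zero s (hω.ne_zero hn.ne')
  obtain ⟨j, hj, hinv⟩ := exists_pow_mul_pow_eq_one hω hn s
  set Q := P.comp (C (ω ^ s) * X) with hQ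
  have hsupp : Q.support = P.support := support_comp_C_mul_X hωs P
  have hdvd : diracComb R r w ∣ Q := diracComb_dvd_of_eval_pow_ne_zero hω hn fun t ht ↦ by
    have hst : P.eval (ω ^ (s + t)) ≠ 0 := by simpa [hQ, pow_add] using ht
    have hmod := modEq_of_eval_pow_ne_zero hω hP hdeg hcard hcount hst hs
    exact Nat.modEq_zero_iff_dvd.mp (Nat.ModEq.add_left_cancel' s hmod)
  have hQ0 : Q ≠ 0 := support_nonempty.mp (hsupp ▸ support_nonempty.mpr hP)
  have hQdeg : Q.natDegree < r * w := by
    rwa [hQ, natDegree_comp, natDegree_C_mul_X _ hωs, mul_one]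
  obtain ⟨c, l, hc, hl, hQc⟩ :=
    exists_eq_C_mul_X_pow_mul_diracComb hQ0 hQdeg (hsupp ▸ hcard) hdvd
  have hPQ : P = Q.comp (C (ω ^ j) * X) := by
    ext m
    rw [hQ, comp_C_mul_X_coeff, comp_C_mul_X_coeff, mul_assoc, ← mul_pow, hinv, one_pow, mul_one]
  exact ⟨c, l, j, hc, hl, hj, by rw [hPQ, hQc, mul_comp, C_comp]⟩

lemma count_eval_diracComb_comp_ne_zero (hω : IsPrimitiveRoot ω (r * w)) (hn : 0 < r * w) {c : R}
    (hc : c ≠ 0) (l j : ℕ) :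
    Nat.count (fun s ↦ (C c * (X ^ l * diracComb R r w).comp (C (ω ^ j) * X)).eval (ω ^ s) ≠ 0)
      (r * w) = r := by
  have hiff (s : ℕ) : (C c * (X ^ l * diracComb R r w).comp (C (ω ^ j) * X)).eval (ω ^ s) ≠ 0 ↔
      w ∣ j + s := by
    simp [← eval_diracComb_ne_zero_iff hω hn, hc, hω.ne_zero hn.ne', pow_add]
  have hperiodic : Function.Periodic (w ∣ ·) (r * w) := fun s ↦
    propext (Nat.dvd_add_left (dvd_mul_left w r))
  simp only [hiff]
  rw [count_period_shift hperiodic, count_dvd_mul (Nat.pos_of_mul_pos_left hn)]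

end IsDomain

theorem equality_iff_general {R : Type*} [CommRing R] [IsDomain R] [DecidableEq R] {n : ℕ} {ω : R}
    (hω : IsPrimitiveRoot ω n) {P : R[X]} (hP : P ≠ 0) (hdeg : P.natDegree < n) {k : ℕ}
    (hk : k = {z ∈ (nthRoots n (1 : R)).toFinset | P.eval z = 0}.card) :
    P.support.card * (n - k) = n ↔
      ∃ (c : R) (r l j : ℕ), c ≠ 0 ∧ r ∣ n ∧ l < r ∧ j < n ∧
        P = C c * (X ^ l * diracComb R r (n / r)).comp (C (ω ^ j) * X) := by
  have hn : 0 < n := Nat.zero_lt_of_lt hdeg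
  rw [hk, sub_card_nthRoots_eval_eq_zero hω]
  constructor
  · intro h
    generalize hcard : P.support.card = w at h
    generalize hcount : Nat.count (fun s ↦ P.eval (ω ^ s) ≠ 0) n = r at h
    obtain rfl : n = r * w := by rw [← h, mul_comm]
    obtain ⟨c, l, j, hc, hl, hj, hPc⟩ := exists_eq_diracComb_comp hω hP hdeg hcard hcount
    rw [← Nat.mul_div_cancel_left w (Nat.zero_lt_of_lt hl)] at hPc
    exact ⟨c, r, l, j, hc, dvd_mul_right r w, hl, hj, hPc⟩
  · rintro ⟨c, r, l, j, hc, ⟨w, rfl⟩, hl, -, rfl⟩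
    rw [Nat.mul_div_cancel_left w (Nat.zero_lt_of_lt hl),
      card_support_diracComb_comp hc (pow_ne_zero j (hω.ne_zero hn.ne')) hl,
      count_eval_diracComb_comp_ne_zero hω hn hc, mul_comm]

/-- Let `n ≥ 1`, `ω = e^{2πi/n}`, and let `P` be a non-zero complex polynomial of
degree at most `n - 1` having exactly `k` distinct roots among the `n`-th roots of
unity. Then `w(P) * (n - k) = n` if and only if `P(z) = c · D_{n,r,l}(ω^j z)` for some
`c ≠ 0`, a divisor `r` of `n`, some `0 ≤ l ≤ r - 1` and some `0 ≤ j ≤ n - 1`. -/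
theorem equality_iff (n : ℕ) (hn : 1 ≤ n)
    (ω : ℂ) (hω : ω = Complex.exp (2 * Real.pi * Complex.I / n))
    (P : Polynomial ℂ) (hP : P ≠ 0) (hdeg : P.natDegree ≤ n - 1)
    (k : ℕ)
    (hk : k = (((Polynomial.nthRoots n (1 : ℂ)).toFinset).filter
      (fun z => P.eval z = 0)).card) :
    P.support.card * (n - k) = n ↔
      ∃ (c : ℂ) (r l j : ℕ), c ≠ 0 ∧ r ∣ n ∧ l < r ∧ j < n ∧
        P = Polynomial.C c *
          ((Dpoly n r l).comp (Polynomial.C (ω ^ j) * Polynomial.X)) :=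
  equality_iff_general (hω ▸ Complex.isPrimitiveRoot_exp n (by omega)) hP (by omega) hk
end

section
/- Let n be a prime number, ω = e^{2πi/n}, and let k_1 < k_2 < ... < k_m and a_1 < a_2 < ... < a_m be two sequences of integers in {0, 1, ..., n−1}. Then the m×m matrix with (i,j) entry ω^{k_i a_j} is invertible. (This is the formulation of the Chebotarev theorem as the non-vanishing of all minors of the Fourier matrix in 0-indexed form.) -/
open Matrix

/-!
Dividing `X ^ a j` by `∏ i, (X - ω ^ k i)` over `ℤ[ω]` factors the minor as the Vandermonde matrix
of the distinct points `ω ^ k i` times the matrix `B` of coefficients of the remainders. All of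
this lifts to `ℤ[Z]`, with `ω` replaced by the indeterminate `Z`, and if `det B` vanishes at
`Z = ω` then the cyclotomic polynomial divides it, so that `n` divides its value at `Z = 1`. But
at `Z = 1` the points collapse to `1`, and modulo `n` a combination of the `X ^ a j` divisible by
`(X - 1) ^ m` is zero: its derivatives of order less than `m` at `1` are given by the falling
factorials of the `a j`, which are distinct modulo `n`, hence by a matrix with Vandermonde
determinant.
-/

section

open Polynomial Lagrange Finset

section NodalRemainder

variable {R S ι : Type*} [CommRing R] [CommRing S] {m : ℕ}

/-- The matrix whose `j`-th column lists the coefficients of the remainder of `q j` on division by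
the nodal polynomial `∏ i, (X - w i)`; it converts values at the nodes `w i` into coefficients. -/
noncomputable def nodalRemainderMatrix (w : Fin m → R) (q : ι → R[X]) : Matrix (Fin m) ι R :=
  of fun l j => (q j %ₘ nodal univ w).coeff l

lemma sum_monomial_nodalRemainderMatrix (w : Fin m → R) (q : ι → R[X]) (j : ι) :
    ∑ l : Fin m, monomial l (nodalRemainderMatrix w q l j) = q j %ₘ nodal univ w := by
  nontriviality R
  exact sum_modByMonic_coeff nodal_monic (by simp)

lemma of_eval_eq_vandermonde_mul_nodalRemainderMatrix (w : Fin m → R) (q : ι → R[X]) :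
    of (fun i j => (q j).eval (w i)) = vandermonde w * nodalRemainderMatrix w q := by
  ext i j
  have heval : (q j %ₘ nodal univ w).eval (w i) = (q j).eval (w i) :=
    eval₂_modByMonic_eq_self_of_root (eval_nodal_at_node (mem_univ i))
  rw [of_apply, ← heval, ← sum_monomial_nodalRemainderMatrix, eval_finsetSum, mul_apply]
  simp only [eval_monomial, vandermonde_apply, mul_comm]

lemma nodalRemainderMatrix_map (φ : R →+* S) (w : Fin m → R) (q : ι → R[X]) :
    (nodalRemainderMatrix w q).map φ =
      nodalRemainderMatrix (fun i => φ (w i)) (fun j => (q j).map φ) := by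
  ext l j
  have hnodal : (nodal univ w).map φ = nodal univ fun i => φ (w i) := by
    simp only [nodal_eq, Polynomial.map_prod, Polynomial.map_sub, map_X, map_C]
  simp only [nodalRemainderMatrix, map_apply, of_apply, ← coeff_map,
    map_modByMonic φ nodal_monic, hnodal]

lemma det_of_pow_eq_det_vandermonde_mul (w : Fin m → R) (a : Fin m → ℕ) :
    (of fun i j => w i ^ a j).det =
      (vandermonde w).det * (nodalRemainderMatrix w fun j => X ^ a j).det := by
  rw [← det_mul, ← of_eval_eq_vandermonde_mul_nodalRemainderMatrix]
  simp only [eval_pow, eval_X]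

lemma aeval_det_nodalRemainderMatrix_X_pow [Algebra R S] (x : S) (k a : Fin m → ℕ) :
    aeval x (nodalRemainderMatrix (fun i => (X : R[X]) ^ k i) fun j => X ^ a j).det =
      (nodalRemainderMatrix (fun i => x ^ k i) fun j => X ^ a j).det := by
  rw [← AlgHom.coe_toRingHom, RingHom.map_det, RingHom.mapMatrix_apply, nodalRemainderMatrix_map]
  simp only [AlgHom.coe_toRingHom, map_pow, aeval_X, Polynomial.map_pow, map_X]

lemma nodal_dvd_sum_of_nodalRemainderMatrix_mulVec_eq_zero [Fintype ι] {w : Fin m → R}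
    {q : ι → R[X]} {d : ι → R} (hd : nodalRemainderMatrix w q *ᵥ d = 0) :
    nodal univ w ∣ ∑ j, d j • q j := by
  rw [← modByMonic_eq_zero_iff_dvd nodal_monic]
  calc (∑ j, d j • q j) %ₘ nodal univ w
      = ∑ j, d j • (q j %ₘ nodal univ w) := by
        simp only [← modByMonicHom_apply, map_sum, map_smul]
    _ = ∑ l : Fin m, monomial l ((nodalRemainderMatrix w q *ᵥ d) l) := by
        simp only [← sum_monomial_nodalRemainderMatrix, smul_sum, smul_monomial, mulVec,
          dotProduct, map_sum, smul_eq_mul, mul_comm]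
        exact sum_comm
    _ = 0 := by simp only [hd, Pi.zero_apply, map_zero, sum_const_zero]

end NodalRemainder

section FallingFactorial

variable {R : Type*} [CommRing R] {m : ℕ}

lemma eval_one_iterate_derivative_sum_smul_X_pow {ι : Type*} (s : Finset ι) (a : ι → ℕ)
    (d : ι → R) (l : ℕ) :
    (derivative^[l] (∑ j ∈ s, d j • X ^ a j)).eval 1 =
      ∑ j ∈ s, d j * (descPochhammer R l).eval (a j : R) := by
  simp only [iterate_derivative_sum, iterate_derivative_smul, iterate_derivative_X_pow_eq_smul,
    eval_finsetSum, eval_smul, eval_pow, eval_X, one_pow, smul_eq_mul, mul_one,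
    descPochhammer_eval_eq_descFactorial]

variable [IsDomain R]

lemma eq_zero_of_X_sub_one_pow_dvd_sum_smul_X_pow {a : Fin m → ℕ}
    (ha : Function.Injective fun j => (a j : R)) {d : Fin m → R}
    (hdvd : (X - C 1) ^ m ∣ ∑ j, d j • (X : R[X]) ^ a j) : d = 0 := by
  have hdet : (of fun j l : Fin m => (descPochhammer R l).eval (a j : R)).det ≠ 0 := by
    rw [← det_eval_matrixOfPolynomials_eq_det_vandermonde (fun j => (a j : R))
      (fun l => descPochhammer R l) (fun l => descPochhammer_natDegree R l)
      fun l => monic_descPochhammer R l]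
    exact det_vandermonde_ne_zero_iff.2 ha
  refine eq_zero_of_vecMul_eq_zero hdet (funext fun l => ?_)
  have hroot : (X - C 1) ∣ derivative^[l] (∑ j, d j • (X : R[X]) ^ a j) :=
    (dvd_pow_self _ (Nat.sub_ne_zero_of_lt l.2)).trans
      (pow_sub_dvd_iterate_derivative_of_pow_dvd l hdvd)
  rwa [dvd_iff_isRoot, IsRoot.def, eval_one_iterate_derivative_sum_smul_X_pow] at hroot

lemma det_nodalRemainderMatrix_one_X_pow_ne_zero {a : Fin m → ℕ}
    (ha : Function.Injective fun j => (a j : R)) :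
    (nodalRemainderMatrix (fun _ : Fin m => (1 : R)) fun j => X ^ a j).det ≠ 0 := by
  intro hdet
  obtain ⟨d, hd_ne, hd⟩ := exists_mulVec_eq_zero_iff.2 hdet
  have hdvd := nodal_dvd_sum_of_nodalRemainderMatrix_mulVec_eq_zero hd
  rw [nodal_eq, prod_const, card_univ, Fintype.card_fin] at hdvd
  exact hd_ne (eq_zero_of_X_sub_one_pow_dvd_sum_smul_X_pow ha hdvd)

end FallingFactorial

section PrimitiveRoot

lemma injective_natCast_of_lt {R ι : Type*} [AddMonoidWithOne R] [IsRightCancelAdd R] (p : ℕ)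
    [CharP R p] {b : ι → ℕ} (hb : Function.Injective b) (hbp : ∀ i, b i < p) :
    Function.Injective fun i => (b i : R) := fun i j hij =>
  hb (CharP.natCast_injOn_Iio R p (hbp i) (hbp j) hij)

lemma primitiveRoot_pow_eq_pow_iff {M : Type*} [CommMonoid M] {n : ℕ} {ζ : M} (hn : n ≠ 0)
    (hζ : IsPrimitiveRoot ζ n) (i j : ℕ) : ζ ^ i = ζ ^ j ↔ (i : ZMod n) = j := by
  rw [(hζ.isOfFinOrder hn).pow_eq_pow_iff_modEq, ← hζ.eq_orderOf, ZMod.natCast_eq_natCast_iff]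

variable {K : Type*} [Field K] [CharZero K] {n : ℕ} {ω : K}

lemma aeval_one_eq_zero_of_aeval_primitiveRoot_eq_zero (R : Type*) [CommRing R] [CharP R n]
    (hn : n.Prime) (hω : IsPrimitiveRoot ω n) {f : ℤ[X]} (hf : aeval ω f = 0) :
    aeval (1 : R) f = 0 := by
  have : Fact n.Prime := ⟨hn⟩
  have hcyc : cyclotomic n ℤ ∣ f := by
    rw [cyclotomic_eq_minpoly hω hn.pos]
    exact minpoly.isIntegrallyClosed_dvd (hω.isIntegral hn.pos) hf
  have hcyc_one : aeval (1 : R) (cyclotomic n ℤ) = 0 := by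
    rw [aeval_def, eval₂_eq_eval_map, map_cyclotomic, eval_one_cyclotomic_prime, CharP.cast_eq_zero]
  exact aeval_eq_zero_of_dvd_aeval_eq_zero hcyc hcyc_one

theorem chebotarev_fourier_minor_general (hn : n.Prime) (hω : IsPrimitiveRoot ω n) {m : ℕ}
    {k a : Fin m → ℕ} (hk : Function.Injective fun i => (k i : ZMod n))
    (ha : Function.Injective fun j => (a j : ZMod n)) :
    IsUnit (of fun i j => ω ^ (k i * a j)) := by
  have : Fact n.Prime := ⟨hn⟩
  let D : ℤ[X] := (nodalRemainderMatrix (fun i => X ^ k i) fun j => X ^ a j).det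
  have hfactor : (of fun i j => ω ^ (k i * a j)).det =
      (vandermonde fun i => ω ^ k i).det * aeval ω D := by
    rw [aeval_det_nodalRemainderMatrix_X_pow, ← det_of_pow_eq_det_vandermonde_mul]
    simp only [pow_mul]
  have hvandermonde : (vandermonde fun i => ω ^ k i).det ≠ 0 :=
    det_vandermonde_ne_zero_iff.2 fun i j hij =>
      hk ((primitiveRoot_pow_eq_pow_iff hn.ne_zero hω _ _).1 hij)
  have hD_one : aeval (1 : ZMod n) D ≠ 0 := by
    simpa only [D, aeval_det_nodalRemainderMatrix_X_pow, one_pow] using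
      det_nodalRemainderMatrix_one_X_pow_ne_zero ha
  have hD : aeval ω D ≠ 0 :=
    mt (aeval_one_eq_zero_of_aeval_primitiveRoot_eq_zero (ZMod n) hn hω) hD_one
  rw [isUnit_iff_isUnit_det, hfactor]
  exact (mul_ne_zero hvandermonde hD).isUnit

end PrimitiveRoot

end

/-- **Chebotarev's theorem, 0-indexed minor form.** Let `n` be prime,
`ω = e^{2πi/n}`, and let `k_1 < ⋯ < k_m` and `a_1 < ⋯ < a_m` be two strictly
increasing sequences of integers in `{0, 1, …, n-1}`. Then the `m × m` matrix with
`(i, j)` entry `ω^{k_i a_j}` is invertible. -/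
theorem chebotarev_fourier_minor (n : ℕ) (hn : n.Prime)
    (ω : ℂ) (hω : ω = Complex.exp (2 * Real.pi * Complex.I / n))
    (m : ℕ) (k a : Fin m → ℕ)
    (hkmono : StrictMono k) (hamono : StrictMono a)
    (hk : ∀ i, k i < n) (ha : ∀ i, a i < n)
    (M : Matrix (Fin m) (Fin m) ℂ)
    (hM : ∀ i j : Fin m, M i j = ω ^ (k i * a j)) :
    IsUnit M := by
  obtain rfl : M = of fun i j => ω ^ (k i * a j) := Matrix.ext hM
  exact chebotarev_fourier_minor_general hn (hω ▸ Complex.isPrimitiveRoot_exp n hn.ne_zero)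
    (injective_natCast_of_lt n hkmono.injective hk) (injective_natCast_of_lt n hamono.injective ha)
end
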